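/- arXiv:2104.11910 — 2 statements merged into one kernel-verified Lean document; each statement's English description precedes it below -/
import Mathlib

section
/- For every finite simple graph G and every k ≥ 2, the increments of the sequence (ϑ_k(G))_k are decreasing: ϑ_{k+1}(G) − ϑ_k(G) ≤ ϑ_k(G) − ϑ_{k−1}(G). In addition, ϑ_2(G) − ϑ_1(G) ≤ ϑ_1(G). -/
open Finset

/-- The sum of the `k` largest eigenvalues (counted with multiplicity) of a
Hermitian real matrix, realized as the supremum over all choices of
`min k n` eigenvalues of their sum. -/
noncomputable def sumKEig {V : Type*} [Fintype V] [DecidableEq V] (k : ℕ)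
    (A : Matrix V V ℝ) (hA : A.IsHermitian) : ℝ :=
  sSup {x : ℝ | ∃ s : Finset V, s.card = min k (Fintype.card V) ∧
    x = ∑ i ∈ s, hA.eigenvalues i}

/-- The generalized theta number `ϑ_k(G)`: the infimum of the sum of the `k`
largest eigenvalues over all real symmetric matrices `A` with `A i j = 1`
whenever `(i,j)` is not an edge of `G`. -/
noncomputable def gtheta {V : Type*} [Fintype V] [DecidableEq V]
    (k : ℕ) (G : SimpleGraph V) : ℝ :=
  sInf {x : ℝ | ∃ (A : Matrix V V ℝ) (hA : A.IsHermitian),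
    (∀ i j, ¬ G.Adj i j → A i j = 1) ∧ x = sumKEig k A hA}


section helpers

variable {V : Type*} [Fintype V] [DecidableEq V]

lemma sumSet_bdd (m : ℕ) (f : V → ℝ) :
    BddAbove {x : ℝ | ∃ s : Finset V, s.card = m ∧ x = ∑ i ∈ s, f i} := by
  apply Set.Finite.bddAbove
  apply (Set.finite_range (fun s : Finset V => ∑ i ∈ s, f i)).subset
  rintro x ⟨s, -, rfl⟩
  exact ⟨s, rfl⟩

lemma sum_le_sumKEig (k : ℕ) (A : Matrix V V ℝ) (hA : A.IsHermitian) (s : Finset V)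
    (hs : s.card = min k (Fintype.card V)) : ∑ i ∈ s, hA.eigenvalues i ≤ sumKEig k A hA :=
  le_csSup (sumSet_bdd _ _) ⟨s, hs, rfl⟩

lemma exists_sumKEig (k : ℕ) (A : Matrix V V ℝ) (hA : A.IsHermitian) :
    ∃ s : Finset V, s.card = min k (Fintype.card V) ∧
      sumKEig k A hA = ∑ i ∈ s, hA.eigenvalues i := by
  have hne : {x : ℝ | ∃ s : Finset V, s.card = min k (Fintype.card V) ∧
      x = ∑ i ∈ s, hA.eigenvalues i}.Nonempty := by
    obtain ⟨s, -, hs⟩ := Finset.exists_subset_card_eq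
      (s := (Finset.univ : Finset V)) (n := min k (Fintype.card V)) (by simp)
    exact ⟨_, s, hs, rfl⟩
  have hfin : {x : ℝ | ∃ s : Finset V, s.card = min k (Fintype.card V) ∧
      x = ∑ i ∈ s, hA.eigenvalues i}.Finite := by
    apply (Set.finite_range (fun s : Finset V => ∑ i ∈ s, hA.eigenvalues i)).subset
    rintro x ⟨s, -, rfl⟩
    exact ⟨s, rfl⟩
  exact hne.csSup_mem hfin

lemma sum_eig (G : SimpleGraph V) (A : Matrix V V ℝ) (hA : A.IsHermitian)
    (h : ∀ i j, ¬ G.Adj i j → A i j = 1) :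
    ∑ i, hA.eigenvalues i = Fintype.card V := by
  have h1 := hA.trace_eq_sum_eigenvalues
  simp only [Matrix.trace, Matrix.diag, RCLike.ofReal_real_eq_id, id] at h1
  rw [← h1, Finset.sum_congr rfl (fun i _ => h i i (G.loopless.irrefl i))]
  simp

lemma sumKEig_nonneg (k : ℕ) (G : SimpleGraph V) (A : Matrix V V ℝ) (hA : A.IsHermitian)
    (h : ∀ i j, ¬ G.Adj i j → A i j = 1) : 0 ≤ sumKEig k A hA := by
  obtain ⟨s, hs, he⟩ := exists_sumKEig k A hA
  rw [he]
  by_cases hneg : ∃ i ∈ s, hA.eigenvalues i < 0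
  · obtain ⟨i, his, hi⟩ := hneg
    have hout : ∀ j ∈ sᶜ, hA.eigenvalues j ≤ 0 := by
      intro j hj
      have hj : j ∉ s := by simpa using hj
      have hj' : j ∉ s.erase i := fun hh => hj (Finset.mem_of_mem_erase hh)
      have hc : (insert j (s.erase i)).card = min k (Fintype.card V) := by
        rw [Finset.card_insert_of_notMem hj', Finset.card_erase_add_one his, hs]
      have h1 := sum_le_sumKEig k A hA _ hc
      rw [he, Finset.sum_insert hj', ← Finset.add_sum_erase s _ his] at h1
      linarith
    have h2 := Finset.sum_nonpos hout
    have h3 := Finset.sum_add_sum_compl s hA.eigenvalues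
    rw [sum_eig G A hA h] at h3
    have : (0 : ℝ) ≤ Fintype.card V := Nat.cast_nonneg _
    linarith
  · push Not at hneg
    exact Finset.sum_nonneg hneg

lemma gtheta_le (k : ℕ) (G : SimpleGraph V) (A : Matrix V V ℝ) (hA : A.IsHermitian)
    (h : ∀ i j, ¬ G.Adj i j → A i j = 1) : gtheta k G ≤ sumKEig k A hA := by
  refine csInf_le ⟨0, ?_⟩ ⟨A, hA, h, rfl⟩
  rintro x ⟨B, hB, h', rfl⟩
  exact sumKEig_nonneg k G B hB h'

lemma ones_psd : (Matrix.of fun _ _ : V => (1 : ℝ)).PosSemidef := by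
  have := Matrix.posSemidef_vecMulVec_self_star (fun _ : V => (1 : ℝ))
  convert this using 1
  ext i j
  simp [Matrix.vecMulVec]

lemma le_gtheta (k : ℕ) (G : SimpleGraph V) (c : ℝ)
    (h : ∀ (A : Matrix V V ℝ) (hA : A.IsHermitian),
      (∀ i j, ¬ G.Adj i j → A i j = 1) → c ≤ sumKEig k A hA) : c ≤ gtheta k G := by
  apply le_csInf
  · exact ⟨_, _, ones_psd.isHermitian, fun _ _ _ => rfl, rfl⟩
  · rintro x ⟨A, hA, h', rfl⟩
    exact h A hA h'

lemma gtheta_le_card (k : ℕ) (G : SimpleGraph V) : gtheta k G ≤ Fintype.card V := by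
  have hJ := (ones_psd (V := V))
  refine (gtheta_le k G _ hJ.isHermitian (fun _ _ _ => rfl)).trans ?_
  obtain ⟨s, -, he⟩ := exists_sumKEig k _ hJ.isHermitian
  rw [he, ← sum_eig G _ hJ.isHermitian (fun _ _ _ => rfl)]
  exact Finset.sum_le_sum_of_subset_of_nonneg (Finset.subset_univ s)
    (fun i _ _ => hJ.eigenvalues_nonneg i)

lemma card_le_gtheta (k : ℕ) (G : SimpleGraph V) (hk : Fintype.card V ≤ k) :
    (Fintype.card V : ℝ) ≤ gtheta k G := by
  apply le_gtheta
  intro A hA h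
  rw [← sum_eig G A hA h]
  exact sum_le_sumKEig k A hA _ (by simp [hk])

lemma sumKEig_concave (k : ℕ) (hk : k + 2 ≤ Fintype.card V) (A : Matrix V V ℝ)
    (hA : A.IsHermitian) :
    sumKEig (k + 2) A hA + sumKEig k A hA ≤ 2 * sumKEig (k + 1) A hA := by
  obtain ⟨s, hs, he⟩ := exists_sumKEig (k + 2) A hA
  obtain ⟨t, ht, he'⟩ := exists_sumKEig k A hA
  rw [min_eq_left (by omega)] at hs ht
  obtain ⟨i, his, hit⟩ := Finset.exists_mem_notMem_of_card_lt_card (s := t) (t := s) (by omega)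
  have h1 := sum_le_sumKEig (k + 1) A hA (s.erase i)
    (by rw [Finset.card_erase_of_mem his]; omega)
  have h2 := sum_le_sumKEig (k + 1) A hA (insert i t)
    (by rw [Finset.card_insert_of_notMem hit]; omega)
  rw [Finset.sum_insert hit] at h2
  rw [he, he', ← Finset.add_sum_erase s _ his]
  linarith

lemma gtheta_concave (k : ℕ) (G : SimpleGraph V) :
    gtheta (k + 2) G + gtheta k G ≤ 2 * gtheta (k + 1) G := by
  by_cases hk : k + 2 ≤ Fintype.card V
  · have : (gtheta (k + 2) G + gtheta k G) / 2 ≤ gtheta (k + 1) G := by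
      apply le_gtheta
      intro A hA h
      have h1 := gtheta_le (k + 2) G A hA h
      have h2 := gtheta_le k G A hA h
      have h3 := sumKEig_concave k hk A hA
      linarith
    linarith
  · have h1 := gtheta_le_card (k + 2) G
    have h2 := gtheta_le_card k G
    have h3 := card_le_gtheta (k + 1) G (by omega)
    linarith

lemma gtheta_zero_nonneg (G : SimpleGraph V) : 0 ≤ gtheta 0 G :=
  le_gtheta 0 G 0 (fun A hA h => sumKEig_nonneg 0 G A hA h)

end helpers

theorem stmt_2 {V : Type*} [Fintype V] [DecidableEq V] (G : SimpleGraph V) :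
    (∀ k : ℕ, 2 ≤ k →
      gtheta (k + 1) G - gtheta k G ≤ gtheta k G - gtheta (k - 1) G) ∧
    gtheta 2 G - gtheta 1 G ≤ gtheta 1 G := by
  constructor
  · intro k hk
    obtain ⟨m, rfl⟩ : ∃ m, k = m + 1 := ⟨k - 1, by omega⟩
    have := gtheta_concave m G
    simp only [Nat.add_sub_cancel]
    linarith
  · have h1 := gtheta_concave 0 G
    have h2 := gtheta_zero_nonneg G
    simp only [Nat.zero_add] at h1
    linarith
end

section
/- Let G be a connected, non-complete strongly regular graph with parameters (n, d, λ, μ), and let the eigenvalues of its adjacency matrix A_G be λ_1 ≥ λ_2 ≥ … ≥ λ_n. Then for every k ≥ 1, ϑ_k(G) = min{ k·ϑ(G), n } = min{ k·n·λ_n/(λ_n − λ_1), n }. -/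
open Finset

open Matrix in
theorem aux_spec {V : Type*} [Fintype V] [DecidableEq V] (A : Matrix V V ℝ) (hA : A.IsHermitian) :
    ∃ U : Matrix V V ℝ, U * Uᵀ = 1 ∧ Uᵀ * U = 1 ∧ A = U * diagonal hA.eigenvalues * Uᵀ := by
  refine ⟨hA.eigenvectorUnitary, ?_, ?_, ?_⟩
  · have := Unitary.coe_mul_star_self hA.eigenvectorUnitary
    simpa [star_eq_conjTranspose] using this
  · have := Unitary.coe_star_mul_self hA.eigenvectorUnitary
    simpa [star_eq_conjTranspose] using this
  · have := hA.spectral_theorem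
    rw [Unitary.conjStarAlgAut_apply] at this
    simpa [star_eq_conjTranspose, Function.comp_def] using this

open Matrix in
theorem aux_vec {V : Type*} [Fintype V] [DecidableEq V] (A : Matrix V V ℝ) (hA : A.IsHermitian)
    (i : V) : ∃ v : V → ℝ, v ⬝ᵥ v = 1 ∧ A *ᵥ v = hA.eigenvalues i • v := by
  refine ⟨⇑(hA.eigenvectorBasis i), ?_, hA.mulVec_eigenvectorBasis i⟩
  have h := hA.eigenvectorBasis.orthonormal.1 i
  have h2 := EuclideanSpace.real_norm_sq_eq (hA.eigenvectorBasis i)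
  rw [h] at h2
  simp only [dotProduct, ← sq]
  rw [← h2]; norm_num

open Matrix in
theorem aux_eig_le {V : Type*} [Fintype V] [DecidableEq V] (A : Matrix V V ℝ) (hA : A.IsHermitian)
    (c : ℝ) (h : ∀ x : V → ℝ, x ⬝ᵥ A *ᵥ x ≤ c * (x ⬝ᵥ x)) (i : V) : hA.eigenvalues i ≤ c := by
  obtain ⟨v, hv, hv2⟩ := aux_vec A hA i
  have := h v
  rw [hv2, dotProduct_smul, hv] at this
  simpa using this

open Matrix in
theorem aux_quad {V : Type*} [Fintype V] [DecidableEq V] (A : Matrix V V ℝ) (hA : A.IsHermitian)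
    (x : V → ℝ) : ∃ y : V → ℝ, y ⬝ᵥ y = x ⬝ᵥ x ∧
      x ⬝ᵥ A *ᵥ x = ∑ i, hA.eigenvalues i * (y i) ^ 2 := by
  obtain ⟨U, h1, h2, h3⟩ := aux_spec A hA
  refine ⟨Uᵀ *ᵥ x, ?_, ?_⟩
  · rw [dotProduct_mulVec, vecMul_transpose, mulVec_mulVec, h1, one_mulVec]
  · conv_lhs => rw [h3]
    rw [← mulVec_mulVec, ← mulVec_mulVec, dotProduct_mulVec, ← mulVec_transpose]
    simp only [dotProduct, mulVec_diagonal]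
    exact Finset.sum_congr rfl fun i _ => by ring

open Matrix in
theorem aux_quad_le {V : Type*} [Fintype V] [DecidableEq V] (A : Matrix V V ℝ) (hA : A.IsHermitian)
    (c : ℝ) (h : ∀ i, hA.eigenvalues i ≤ c) (x : V → ℝ) : x ⬝ᵥ A *ᵥ x ≤ c * (x ⬝ᵥ x) := by
  obtain ⟨y, h1, h2⟩ := aux_quad A hA x
  rw [h2, ← h1, dotProduct, Finset.mul_sum]
  exact Finset.sum_le_sum fun i _ => by nlinarith [h i, sq_nonneg (y i)]

open Matrix in
theorem aux_quad_ge {V : Type*} [Fintype V] [DecidableEq V] (A : Matrix V V ℝ) (hA : A.IsHermitian)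
    (c : ℝ) (h : ∀ i, c ≤ hA.eigenvalues i) (x : V → ℝ) : c * (x ⬝ᵥ x) ≤ x ⬝ᵥ A *ᵥ x := by
  obtain ⟨y, h1, h2⟩ := aux_quad A hA x
  rw [h2, ← h1, dotProduct, Finset.mul_sum]
  exact Finset.sum_le_sum fun i _ => by nlinarith [h i, sq_nonneg (y i)]

/-- Weighted sums with weights in `[0,1]` of total weight `K` are dominated by some `K`-subset. -/
theorem aux_subset {V : Type*} [Fintype V] [DecidableEq V] (f y : V → ℝ) (K : ℕ)
    (hK : K ≤ Fintype.card V) (h0 : ∀ i, 0 ≤ y i) (h1 : ∀ i, y i ≤ 1) (hs : ∑ i, y i = K) :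
    ∃ s : Finset V, s.card = K ∧ ∑ i, f i * y i ≤ ∑ i ∈ s, f i := by
  have hne : (Finset.powersetCard K (Finset.univ : Finset V)).Nonempty :=
    Finset.powersetCard_nonempty.2 (by simpa using hK)
  obtain ⟨s, hsm, hmax⟩ := Finset.exists_max_image _ (fun s => ∑ i ∈ s, f i) hne
  have hcard : s.card = K := (Finset.mem_powersetCard.1 hsm).2
  refine ⟨s, hcard, ?_⟩
  have hex : ∀ i ∈ s, ∀ j ∉ s, f j ≤ f i := by
    intro i hi j hj
    have hj' : j ∉ s.erase i := fun h => hj (Finset.mem_of_mem_erase h)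
    have := hmax (insert j (s.erase i)) (by
      rw [Finset.mem_powersetCard]
      refine ⟨Finset.subset_univ _, ?_⟩
      rw [Finset.card_insert_of_notMem hj', Finset.card_erase_add_one hi, hcard])
    rw [Finset.sum_insert hj', ← Finset.add_sum_erase s f hi] at this
    linarith
  obtain ⟨c, hc1, hc2⟩ : ∃ c : ℝ, (∀ i ∈ s, c ≤ f i) ∧ (∀ j ∉ s, f j ≤ c) := by
    rcases s.eq_empty_or_nonempty with rfl | hsn
    · rcases (Finset.univ : Finset V).eq_empty_or_nonempty with h | h
      · exact ⟨0, by simp, fun j _ => absurd (Finset.mem_univ j) (by simp [h])⟩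
      · obtain ⟨m, _, hm⟩ := Finset.exists_max_image _ f h
        exact ⟨f m, by simp, fun j _ => hm j (Finset.mem_univ j)⟩
    · obtain ⟨m, hm, hmin⟩ := Finset.exists_min_image s f hsn
      exact ⟨f m, hmin, fun j hj => hex m hm j hj⟩
  have key : ∑ i, (f i - c) * y i ≤ ∑ i, if i ∈ s then (f i - c) else 0 := by
    refine Finset.sum_le_sum fun i _ => ?_
    split_ifs with h
    · nlinarith [hc1 i h, h1 i]
    · nlinarith [hc2 i h, h0 i]
  have e1 : ∑ i, (f i - c) * y i = ∑ i, f i * y i - c * K := by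
    rw [← hs, Finset.mul_sum, ← Finset.sum_sub_distrib]
    exact Finset.sum_congr rfl fun i _ => by ring
  have e2 : (∑ i, if i ∈ s then (f i - c) else 0) = ∑ i ∈ s, f i - c * K := by
    rw [← Finset.sum_filter, Finset.filter_mem_eq_inter, Finset.univ_inter,
      Finset.sum_sub_distrib, Finset.sum_const, hcard]
    simp [mul_comm]
  linarith

theorem aux_sumKEig_le {V : Type*} [Fintype V] [DecidableEq V] (k : ℕ)
    (A : Matrix V V ℝ) (hA : A.IsHermitian) (B : ℝ)
    (h : ∀ s : Finset V, s.card = min k (Fintype.card V) → ∑ i ∈ s, hA.eigenvalues i ≤ B) :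
    sumKEig k A hA ≤ B := by
  unfold sumKEig
  apply csSup_le
  · obtain ⟨s, -, hs⟩ := Finset.exists_subset_card_eq
      (s := (Finset.univ : Finset V)) (n := min k (Fintype.card V)) (by simp)
    exact ⟨_, s, hs, rfl⟩
  · rintro x ⟨s, hs, rfl⟩
    exact h s hs

theorem aux_le_sumKEig {V : Type*} [Fintype V] [DecidableEq V] (k : ℕ)
    (A : Matrix V V ℝ) (hA : A.IsHermitian) (s : Finset V)
    (hs : s.card = min k (Fintype.card V)) : ∑ i ∈ s, hA.eigenvalues i ≤ sumKEig k A hA := by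
  unfold sumKEig
  apply le_csSup
  · apply Set.Finite.bddAbove
    apply Set.Finite.subset (Set.finite_range fun s : Finset V => ∑ i ∈ s, hA.eigenvalues i)
    rintro x ⟨s, hs, rfl⟩
    exact ⟨s, rfl⟩
  · exact ⟨s, hs, rfl⟩

open Matrix in
theorem aux_dual {V : Type*} [Fintype V] [DecidableEq V] (k : ℕ)
    (A : Matrix V V ℝ) (hA : A.IsHermitian) (Y : Matrix V V ℝ)
    (h0 : ∀ x : V → ℝ, 0 ≤ x ⬝ᵥ Y *ᵥ x) (h1 : ∀ x : V → ℝ, x ⬝ᵥ Y *ᵥ x ≤ x ⬝ᵥ x)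
    (htr : Y.trace = (min k (Fintype.card V) : ℕ)) :
    (A * Y).trace ≤ sumKEig k A hA := by
  obtain ⟨U, hU1, hU2, hU3⟩ := aux_spec A hA
  have hdiag : ∀ i, (Uᵀ * Y * U) i i = (U.col i) ⬝ᵥ Y *ᵥ (U.col i) := by
    intro i
    rw [Matrix.mul_assoc]
    rfl
  have hone : ∀ i, (U.col i) ⬝ᵥ (U.col i) = 1 := by
    intro i
    have : (Uᵀ * U) i i = 1 := by rw [hU2]; simp
    exact this
  have htr2 : ∑ i, (Uᵀ * Y * U) i i = (min k (Fintype.card V) : ℕ) := by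
    rw [← htr]
    change (Uᵀ * Y * U).trace = _
    rw [Matrix.trace_mul_comm, ← Matrix.mul_assoc, hU1, Matrix.one_mul]
  obtain ⟨s, hs, hle⟩ := aux_subset hA.eigenvalues (fun i => (Uᵀ * Y * U) i i)
    (min k (Fintype.card V)) (min_le_right _ _)
    (fun i => by simp only [hdiag]; exact h0 _)
    (fun i => by simp only [hdiag]; exact (h1 _).trans (hone i).le) htr2
  refine le_trans (le_of_eq ?_) (hle.trans (aux_le_sumKEig k A hA s hs))
  have : (A * Y).trace = (diagonal hA.eigenvalues * (Uᵀ * Y * U)).trace := by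
    conv_lhs => rw [hU3]
    rw [Matrix.mul_assoc, Matrix.mul_assoc, Matrix.trace_mul_comm]
    simp only [Matrix.mul_assoc]
  rw [this]
  simp [Matrix.trace, Matrix.diagonal_mul]

open Matrix in
theorem aux_J {V : Type*} [Fintype V] (x : V → ℝ) :
    x ⬝ᵥ (Matrix.of fun _ _ => (1 : ℝ) : Matrix V V ℝ) *ᵥ x = (∑ i, x i) ^ 2 := by
  simp only [dotProduct, mulVec, of_apply, one_mul]
  rw [← Finset.sum_mul, sq]

theorem aux_compl {V : Type*} [Fintype V] [DecidableEq V] (G : SimpleGraph V)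
    [DecidableRel G.Adj] :
    Gᶜ.adjMatrix ℝ = (Matrix.of fun _ _ => (1 : ℝ)) - 1 - G.adjMatrix ℝ := by
  ext i j
  simp only [SimpleGraph.adjMatrix_apply, SimpleGraph.compl_adj, Matrix.sub_apply, Matrix.of_apply,
    Matrix.one_apply]
  by_cases h : i = j
  · subst h; simp
  · by_cases h2 : G.Adj i j <;> simp [h, h2]

open Matrix in
theorem aux_sum_mulVec {V : Type*} [Fintype V] [DecidableEq V] (G : SimpleGraph V)
    [DecidableRel G.Adj] (d : ℕ) (hreg : G.IsRegularOfDegree d) (x : V → ℝ) :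
    ∑ i, (G.adjMatrix ℝ *ᵥ x) i = d * ∑ i, x i := by
  simp only [mulVec, dotProduct]
  rw [Finset.sum_comm, Finset.mul_sum]
  refine Finset.sum_congr rfl fun j _ => ?_
  rw [← Finset.sum_mul]
  congr 1
  rw [← hreg.degree_eq j, SimpleGraph.degree_eq_sum_if_adj]
  exact Finset.sum_congr rfl fun i _ => by simp [SimpleGraph.adj_comm]

open Matrix in
theorem aux_lap {V : Type*} [Fintype V] [DecidableEq V] (G : SimpleGraph V)
    [DecidableRel G.Adj] (d : ℕ) (hreg : G.IsRegularOfDegree d) (x : V → ℝ) :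
    x ⬝ᵥ G.adjMatrix ℝ *ᵥ x ≤ d * (x ⬝ᵥ x) := by
  have h := (SimpleGraph.posSemidef_lapMatrix ℝ G).dotProduct_mulVec_nonneg x
  rw [SimpleGraph.lapMatrix, sub_mulVec, dotProduct_sub, star_trivial,
    SimpleGraph.dotProduct_mulVec_degMatrix] at h
  simp only [hreg.degree_eq, mul_assoc] at h
  rw [← Finset.mul_sum] at h
  simp only [dotProduct] at h ⊢
  linarith

open Matrix in
theorem aux_sq {V : Type*} [Fintype V] [DecidableEq V] (G : SimpleGraph V)
    [DecidableRel G.Adj] (n d l μ : ℕ) (hsrg : G.IsSRGWith n d l μ) (x : V → ℝ) :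
    (G.adjMatrix ℝ *ᵥ x) ⬝ᵥ (G.adjMatrix ℝ *ᵥ x) = d * (x ⬝ᵥ x) + l * (x ⬝ᵥ G.adjMatrix ℝ *ᵥ x)
      + μ * ((∑ i, x i) ^ 2 - x ⬝ᵥ x - x ⬝ᵥ G.adjMatrix ℝ *ᵥ x) := by
  have h := hsrg.matrix_eq (α := ℝ)
  rw [aux_compl] at h
  have h2 : (G.adjMatrix ℝ *ᵥ x) ⬝ᵥ (G.adjMatrix ℝ *ᵥ x) = x ⬝ᵥ (G.adjMatrix ℝ ^ 2) *ᵥ x := by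
    rw [sq, ← mulVec_mulVec, dotProduct_mulVec x, ← mulVec_transpose,
      SimpleGraph.transpose_adjMatrix]
  rw [h2, h, ← aux_J]
  simp only [← Nat.cast_smul_eq_nsmul ℝ, add_mulVec, sub_mulVec, smul_mulVec, dotProduct_add,
    dotProduct_sub, dotProduct_smul, one_mulVec, smul_eq_mul]

open Matrix in
theorem aux_cauchy {V : Type*} [Fintype V] (x : V → ℝ) :
    (∑ i, x i) ^ 2 ≤ Fintype.card V * (x ⬝ᵥ x) := by
  have := sq_sum_le_card_mul_sum_sq (s := (Finset.univ : Finset V)) (f := x)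
  simpa [dotProduct, sq] using this

/-- Key bound coming from `‖(M - ρ) x‖² ≥ ((d - ρ) s)² / n`. -/
theorem aux_root {V : Type*} [Fintype V] [DecidableEq V] (G : SimpleGraph V)
    [DecidableRel G.Adj] (n d l μ : ℕ) (hsrg : G.IsSRGWith n d l μ) (x : V → ℝ) (ρ : ℝ) :
    (d - ρ) ^ 2 * (∑ i, x i) ^ 2 ≤ n * (d * (x ⬝ᵥ x) + l * (x ⬝ᵥ (G.adjMatrix ℝ).mulVec x)
      + μ * ((∑ i, x i) ^ 2 - x ⬝ᵥ x - x ⬝ᵥ (G.adjMatrix ℝ).mulVec x)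
      - 2 * ρ * (x ⬝ᵥ (G.adjMatrix ℝ).mulVec x) + ρ ^ 2 * (x ⬝ᵥ x)) := by
  have h := aux_cauchy ((G.adjMatrix ℝ).mulVec x - ρ • x)
  rw [hsrg.card] at h
  have e1 : ∑ i, ((G.adjMatrix ℝ).mulVec x - ρ • x) i = (d - ρ) * ∑ i, x i := by
    simp only [Pi.sub_apply, Finset.sum_sub_distrib, Pi.smul_apply, smul_eq_mul]
    rw [aux_sum_mulVec G d hsrg.regular, ← Finset.mul_sum]
    ring
  rw [e1] at h
  simp only [sub_dotProduct, dotProduct_sub, smul_dotProduct, dotProduct_smul, smul_eq_mul] at h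
  rw [aux_sq G n d l μ hsrg, dotProduct_comm ((G.adjMatrix ℝ).mulVec x) x] at h
  linarith

open Matrix in
theorem aux_lower {V : Type*} [Fintype V] [DecidableEq V] (G : SimpleGraph V)
    [DecidableRel G.Adj] (n d l μ : ℕ) (hsrg : G.IsSRGWith n d l μ) (hn : (0 : ℝ) < n)
    (τ θ ϑ : ℝ) (hθ : 0 ≤ θ) (hm : (0 : ℝ) < n - 1 - d)
    (hϑ : (ϑ - 1) * (1 + θ) = n - 1 - d) (hc : -1 - τ ≤ n - 1 - d)
    (hup : ∀ x : V → ℝ, n * (x ⬝ᵥ G.adjMatrix ℝ *ᵥ x) ≤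
      d * (∑ i, x i) ^ 2 + θ * (n * (x ⬝ᵥ x) - (∑ i, x i) ^ 2))
    (hlo : ∀ x : V → ℝ, d * (∑ i, x i) ^ 2 + τ * (n * (x ⬝ᵥ x) - (∑ i, x i) ^ 2) ≤
      n * (x ⬝ᵥ G.adjMatrix ℝ *ᵥ x))
    (k : ℕ) (A : Matrix V V ℝ) (hA : A.IsHermitian) (hAG : ∀ i j, ¬ G.Adj i j → A i j = 1) :
    min ((k : ℝ) * ϑ) n ≤ sumKEig k A hA := by
  have hϑ1 : 1 ≤ ϑ := by
    by_contra hcon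
    push Not at hcon
    nlinarith
  set K : ℕ := min k n with hKdef
  have hKn : (K : ℝ) ≤ n := by exact_mod_cast min_le_right k n
  set a : ℝ := K / n with ha
  have haK : a * n = K := by rw [ha]; field_simp
  have ha0 : 0 ≤ a := by positivity
  have ha1 : a ≤ 1 := by rw [ha, div_le_one hn]; exact hKn
  set c : ℝ := min (a * ϑ) 1 with hcdef
  have hc1 : c ≤ 1 := min_le_right _ _
  have hca : c ≤ a * ϑ := min_le_left _ _
  have hac : a ≤ c := le_min (by nlinarith) ha1
  set b : ℝ := (c - a) / (n - 1 - d) with hb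
  have hb0 : 0 ≤ b := div_nonneg (by linarith) hm.le
  have hbm : b * (n - 1 - d) = c - a := by rw [hb]; field_simp
  have hbθ : b * (1 + θ) ≤ a := by
    have h1 : b * (1 + θ) * (n - 1 - d) ≤ a * (n - 1 - d) := by
      calc b * (1 + θ) * (n - 1 - d) = (c - a) * (1 + θ) := by rw [← hbm]; ring
        _ ≤ (a * ϑ - a) * (1 + θ) := by
            apply mul_le_mul_of_nonneg_right <;> linarith
        _ = a * (n - 1 - d) := by rw [← hϑ]; ring
    exact le_of_mul_le_mul_right h1 hm
  set Y : Matrix V V ℝ := a • (1 : Matrix V V ℝ) +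
    b • ((Matrix.of fun _ _ => (1 : ℝ)) - 1 - G.adjMatrix ℝ) with hY
  have hquad : ∀ x : V → ℝ, x ⬝ᵥ Y *ᵥ x = a * (x ⬝ᵥ x) +
      b * ((∑ i, x i) ^ 2 - x ⬝ᵥ x - x ⬝ᵥ G.adjMatrix ℝ *ᵥ x) := by
    intro x
    rw [hY, ← aux_J]
    simp only [add_mulVec, sub_mulVec, smul_mulVec, dotProduct_add,
      dotProduct_sub, dotProduct_smul, one_mulVec, smul_eq_mul]
  have htr : Y.trace = (min k (Fintype.card V) : ℕ) := by
    rw [hsrg.card, ← hKdef, ← haK, hY]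
    have h1 : (Matrix.of fun _ _ => (1 : ℝ) : Matrix V V ℝ).trace = n := by
      simp [Matrix.trace, hsrg.card]
    have h2 : (G.adjMatrix ℝ).trace = 0 := by simp
    simp only [Matrix.trace_add, Matrix.trace_smul, Matrix.trace_sub, h1, h2, Matrix.trace_one,
      hsrg.card, smul_eq_mul]
    ring
  have hdual := aux_dual k A hA Y ?_ ?_ htr
  · refine le_trans ?_ hdual
    have h1 : (A * Y).trace = (fun _ => 1 : V → ℝ) ⬝ᵥ Y *ᵥ (fun _ => 1) := by
      rw [Matrix.trace_mul_comm]
      simp only [Matrix.trace, Matrix.diag, Matrix.mul_apply, dotProduct, mulVec, one_mul, mul_one]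
      refine Finset.sum_congr rfl fun i _ => Finset.sum_congr rfl fun j _ => ?_
      by_cases h : G.Adj j i
      · have hY0 : Y i j = 0 := by
          have hne : i ≠ j := h.ne'
          simp [hY, hne, h.symm]
        rw [hY0]; simp
      · rw [hAG j i h, mul_one]
    have hJ : (fun _ => 1 : V → ℝ) ⬝ᵥ G.adjMatrix ℝ *ᵥ (fun _ => 1) = d * n := by
      have := aux_sum_mulVec G d hsrg.regular (fun _ => 1)
      simp only [dotProduct, one_mul]
      rw [this]; simp [hsrg.card]
    have hr : (fun _ => 1 : V → ℝ) ⬝ᵥ (fun _ => 1) = n := by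
      simp [dotProduct, hsrg.card]
    have hs : ∑ _i : V, (1 : ℝ) = n := by simp [hsrg.card]
    rw [h1, hquad, hJ, hr, hs]
    have h2 : a * n + b * ((n : ℝ) ^ 2 - n - d * n) = c * n := by
      have : c = a + b * (n - 1 - d) := by linarith
      rw [this]; ring
    rw [h2, hcdef, min_mul_of_nonneg _ _ hn.le, one_mul]
    have h3 : a * ϑ * n = K * ϑ := by rw [← haK]; ring
    rw [h3]
    rcases le_total k n with hkn | hkn
    · rw [hKdef, min_eq_left hkn]
    · rw [hKdef, min_eq_right hkn]
      refine le_trans (min_le_right _ _) (le_min ?_ le_rfl)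
      nlinarith
  · intro x
    rw [hquad]
    have h1 := hup x
    have h2 := aux_cauchy x
    rw [hsrg.card] at h2
    have h3 : 0 ≤ n * (a * (x ⬝ᵥ x) +
      b * ((∑ i, x i) ^ 2 - x ⬝ᵥ x - x ⬝ᵥ G.adjMatrix ℝ *ᵥ x)) := by
      have e1 := mul_le_mul_of_nonneg_left h1 hb0
      have e2 := mul_nonneg (sub_nonneg.2 hbθ) (sub_nonneg.2 h2)
      have e3 : 0 ≤ (a + b * (n - 1 - d)) * (∑ i, x i) ^ 2 :=
        mul_nonneg (by linarith) (sq_nonneg _)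
      linarith
    exact nonneg_of_mul_nonneg_right h3 hn
  · intro x
    rw [hquad]
    have h1 := hlo x
    have h2 := aux_cauchy x
    rw [hsrg.card] at h2
    have h3 : n * (a * (x ⬝ᵥ x) +
      b * ((∑ i, x i) ^ 2 - x ⬝ᵥ x - x ⬝ᵥ G.adjMatrix ℝ *ᵥ x)) ≤ n * (x ⬝ᵥ x) := by
      have e1 := mul_le_mul_of_nonneg_left h1 hb0
      have e0 : a + b * (-1 - τ) ≤ 1 := by
        have := mul_le_mul_of_nonneg_left hc hb0
        linarith
      have e2 := mul_nonneg (sub_nonneg.2 e0) (sub_nonneg.2 h2)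
      have e3 : 0 ≤ (1 - (a + b * (n - 1 - d))) * (∑ i, x i) ^ 2 :=
        mul_nonneg (by linarith) (sq_nonneg _)
      linarith
    exact le_of_mul_le_mul_left h3 hn

open Matrix in
theorem aux_gtheta {V : Type*} [Fintype V] [DecidableEq V] (G : SimpleGraph V)
    [DecidableRel G.Adj] (n d l μ : ℕ) (hsrg : G.IsSRGWith n d l μ) (hn : (0 : ℝ) < n)
    (τ θ : ℝ) (hτ : τ < 0) (hθ : 0 ≤ θ) (hsum : θ + τ = l - μ) (hprod : θ * τ = μ - d)
    (hnμ : (n : ℝ) * μ = (d - θ) * (d - τ)) (hm : (0 : ℝ) < n - 1 - d)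
    (hc : -1 - τ ≤ n - 1 - d) (k : ℕ) (hk : 1 ≤ k) :
    gtheta k G = min ((k : ℝ) * (n * τ / (τ - d))) n := by
  have hd0 : (0 : ℝ) ≤ d := Nat.cast_nonneg d
  have hτd : τ - d < 0 := by linarith
  set ϑ : ℝ := n * τ / (τ - d) with hϑdef
  have hϑmul : ϑ * (τ - d) = n * τ := by rw [hϑdef]; field_simp [hτd.ne]
  have hϑ : (ϑ - 1) * (1 + θ) = n - 1 - d := by
    have : ((ϑ - 1) * (1 + θ)) * (τ - d) = (n - 1 - d) * (τ - d) := by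
      have e : ((ϑ - 1) * (1 + θ)) * (τ - d) = (n * τ - (τ - d)) * (1 + θ) := by
        rw [← hϑmul]; ring
      rw [e]
      linear_combination hnμ + (n : ℝ) * hprod - hprod + hprod
    exact mul_right_cancel₀ hτd.ne this
  have hup : ∀ x : V → ℝ, n * (x ⬝ᵥ G.adjMatrix ℝ *ᵥ x) ≤
      d * (∑ i, x i) ^ 2 + θ * (n * (x ⬝ᵥ x) - (∑ i, x i) ^ 2) := by
    intro x
    have h := aux_root G n d l μ hsrg x θ
    have hpos : 0 < θ - τ := by linarith
    refine le_of_mul_le_mul_left ?_ hpos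
    generalize (x ⬝ᵥ G.adjMatrix ℝ *ᵥ x) = q at *
    generalize (x ⬝ᵥ x) = r at *
    generalize (∑ i, x i) ^ 2 = t at *
    have hl : (l : ℝ) = θ + τ + μ := by linarith
    have hdd : (d : ℝ) = μ - θ * τ := by linarith
    have e : n * (d * r + l * q + μ * (t - r - q) - 2 * θ * q + θ ^ 2 * r) - (d - θ) ^ 2 * t
      = (θ - τ) * (d * t + θ * (n * r - t)) - (θ - τ) * (n * q) := by
      linear_combination ((n : ℝ) * r) * hprod + (-(n : ℝ) * q) * hsum + t * hnμ
    linarith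
  have hlo : ∀ x : V → ℝ, d * (∑ i, x i) ^ 2 + τ * (n * (x ⬝ᵥ x) - (∑ i, x i) ^ 2) ≤
      n * (x ⬝ᵥ G.adjMatrix ℝ *ᵥ x) := by
    intro x
    have h := aux_root G n d l μ hsrg x τ
    have hpos : 0 < θ - τ := by linarith
    refine le_of_mul_le_mul_left ?_ hpos
    generalize (x ⬝ᵥ G.adjMatrix ℝ *ᵥ x) = q at *
    generalize (x ⬝ᵥ x) = r at *
    generalize (∑ i, x i) ^ 2 = t at *
    have e : n * (d * r + l * q + μ * (t - r - q) - 2 * τ * q + τ ^ 2 * r) - (d - τ) ^ 2 * t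
      = (θ - τ) * (n * q) - (θ - τ) * (d * t + τ * (n * r - t)) := by
      linear_combination ((n : ℝ) * r) * hprod + (-(n : ℝ) * q) * hsum + t * hnμ
    linarith
  have hlower := aux_lower G n d l μ hsrg hn τ θ ϑ hθ hm hϑ hc hup hlo k
  have hϑ0 : 0 ≤ ϑ := by
    rw [hϑdef]; exact div_nonneg_of_nonpos (by nlinarith) hτd.le
  have hbdd : BddBelow {x : ℝ | ∃ (A : Matrix V V ℝ) (hA : A.IsHermitian),
      (∀ i j, ¬ G.Adj i j → A i j = 1) ∧ x = sumKEig k A hA} := by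
    refine ⟨min ((k : ℝ) * ϑ) n, ?_⟩
    rintro x ⟨A, hA, hAG, rfl⟩
    exact hlower A hA hAG
  have hJh : (Matrix.of fun _ _ => (1 : ℝ) : Matrix V V ℝ).IsHermitian := by
    ext i j; simp
  apply le_antisymm
  · refine le_min ?_ ?_
    · set t : ℝ := n / (τ - d) with ht
      have ht0 : t ≤ 0 := div_nonpos_of_nonneg_of_nonpos hn.le hτd.le
      have htm : t * (τ - d) = n := by rw [ht]; field_simp [hτd.ne]
      have htτ : t * τ = ϑ := by rw [ht, hϑdef]; ring
      have hAh : ((Matrix.of fun _ _ => (1 : ℝ) : Matrix V V ℝ) + t • G.adjMatrix ℝ).IsHermitian := by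
        ext i j; simp [SimpleGraph.adj_comm]
      refine le_trans (csInf_le hbdd ⟨_, hAh, ?_, rfl⟩) ?_
      · intro i j hij
        simp [hij]
      · apply aux_sumKEig_le
        intro s hs
        have heig : ∀ i, hAh.eigenvalues i ≤ ϑ := by
          apply aux_eig_le
          intro x
          rw [add_mulVec, dotProduct_add, aux_J, smul_mulVec, dotProduct_smul, smul_eq_mul]
          have h1 := mul_le_mul_of_nonpos_left (hlo x) ht0
          refine le_of_mul_le_mul_left ?_ hn
          have e : t * d = ϑ - n := by linarith
          generalize (x ⬝ᵥ G.adjMatrix ℝ *ᵥ x) = q at *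
          generalize (x ⬝ᵥ x) = r at *
          generalize (∑ i, x i) ^ 2 = w at *
          have e2 : t * (d * w + τ * (n * r - w)) = (ϑ - n) * w + ϑ * (n * r - w) := by
            rw [← htτ] at e ⊢
            linear_combination w * e
          linarith
        calc ∑ i ∈ s, hAh.eigenvalues i ≤ ∑ i ∈ s, ϑ := Finset.sum_le_sum fun i _ => heig i
          _ = s.card * ϑ := by simp
          _ ≤ k * ϑ := by
            apply mul_le_mul_of_nonneg_right _ hϑ0
            rw [hs]; exact_mod_cast min_le_left _ _
    · refine le_trans (csInf_le hbdd ⟨_, hJh, ?_, rfl⟩) ?_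
      · intro i j hij; simp
      · apply aux_sumKEig_le
        intro s hs
        have hpsd : ∀ i, 0 ≤ hJh.eigenvalues i := by
          intro i
          obtain ⟨v, hv, hv2⟩ := aux_vec _ hJh i
          have h1 := aux_J v
          rw [hv2, dotProduct_smul, hv] at h1
          simp only [smul_eq_mul, mul_one] at h1
          rw [h1]; exact sq_nonneg _
        have htr := hJh.trace_eq_sum_eigenvalues
        calc ∑ i ∈ s, hJh.eigenvalues i ≤ ∑ i, hJh.eigenvalues i :=
              Finset.sum_le_sum_of_subset_of_nonneg (Finset.subset_univ _) fun i _ _ => hpsd i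
          _ = n := by
            simp [Matrix.trace, hsrg.card] at htr
            exact htr.symm
  · apply le_csInf
    · exact ⟨_, _, hJh, fun i j _ => by simp, rfl⟩
    · rintro x ⟨A, hA, hAG, rfl⟩
      exact hlower A hA hAG

theorem stmt_14 {V : Type*} [Fintype V] [DecidableEq V]
    (G : SimpleGraph V) [DecidableRel G.Adj]
    (n d l μ : ℕ) (hsrg : G.IsSRGWith n d l μ)
    (hconn : G.Connected) (hncomplete : G ≠ ⊤) (hnpos : 0 < n)
    (hA : (G.adjMatrix ℝ).IsHermitian)
    (lam : Fin n → ℝ) (hsort : Antitone lam)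
    (henum : ∃ e : Fin n ≃ V, ∀ i, lam i = hA.eigenvalues (e i))
    (k : ℕ) (hk : 1 ≤ k) :
    gtheta k G = min ((k : ℝ) * gtheta 1 G) (n : ℝ) ∧
    gtheta k G =
      min ((k : ℝ) * (n : ℝ) * lam ⟨n - 1, by omega⟩ /
            (lam ⟨n - 1, by omega⟩ - lam ⟨0, hnpos⟩)) (n : ℝ) := by
  classical
  obtain ⟨e, he⟩ := henum
  have hn : (0 : ℝ) < n := by exact_mod_cast hnpos
  set τ : ℝ := lam ⟨n - 1, by omega⟩ with hτdef
  set σ : ℝ := lam ⟨0, hnpos⟩ with hσdef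
  have hmin : ∀ i, τ ≤ hA.eigenvalues i := by
    intro i
    have h1 := he (e.symm i)
    rw [Equiv.apply_symm_apply] at h1
    rw [← h1]
    apply hsort
    rw [Fin.le_def]
    have := (e.symm i).2
    simp only
    omega
  have hmax : ∀ i, hA.eigenvalues i ≤ σ := by
    intro i
    have h1 := he (e.symm i)
    rw [Equiv.apply_symm_apply] at h1
    rw [← h1]
    apply hsort
    rw [Fin.le_def]
    simp
  -- a non-adjacent pair
  obtain ⟨i0, j0, hij, hnadj⟩ : ∃ i j, i ≠ j ∧ ¬ G.Adj i j := by
    by_contra hcon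
    push Not at hcon
    apply hncomplete
    ext i j
    simp only [SimpleGraph.top_adj]
    exact ⟨fun h => h.ne, hcon i j⟩
  have : Nontrivial V := ⟨i0, j0, hij⟩
  have hμd : μ ≤ d := by
    rw [← hsrg.of_not_adj hij hnadj, ← hsrg.regular.degree_eq i0]
    exact G.card_commonNeighbors_le_degree_left i0 j0
  have hμd' : (μ : ℝ) ≤ d := by exact_mod_cast hμd
  obtain ⟨w0, hw0⟩ := hconn.preconnected.exists_adj_of_nontrivial i0
  have hcdeg : 0 < n - d - 1 := by
    rw [← hsrg.compl_is_regular.degree_eq i0, SimpleGraph.degree_pos_iff_exists_adj]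
    exact ⟨j0, by simp [hij, hnadj]⟩
  have hcast : ((n - d - 1 : ℕ) : ℝ) = n - 1 - d := by
    have h1 : d + 1 ≤ n := by omega
    rw [Nat.sub_sub, Nat.cast_sub h1]; push_cast; ring
  have hm : (0 : ℝ) < n - 1 - d := by rw [← hcast]; exact_mod_cast hcdeg
  have hd0 : (0 : ℝ) ≤ d := Nat.cast_nonneg d
  -- facts on the all-ones vector
  have hs : ∑ _i : V, (1 : ℝ) = n := by simp [hsrg.card]
  have hr : (fun _ => 1 : V → ℝ) ⬝ᵥ (fun _ => 1) = n := by
    simp [dotProduct, hsrg.card]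
  have hones : (G.adjMatrix ℝ).mulVec (fun _ => 1 : V → ℝ) = fun _ => (d : ℝ) := by
    ext i
    simp only [SimpleGraph.adjMatrix_mulVec_apply]
    simp [hsrg.regular.degree_eq i]
  have hq : (fun _ => 1 : V → ℝ) ⬝ᵥ (G.adjMatrix ℝ).mulVec (fun _ => 1) = d * n := by
    rw [hones]; simp [dotProduct, hsrg.card, mul_comm]
  -- the largest eigenvalue is d
  have hσ : σ = d := by
    apply le_antisymm
    · obtain ⟨v, hv, hv2⟩ := aux_vec _ hA (e ⟨0, hnpos⟩)
      have h1 := aux_lap G d hsrg.regular v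
      rw [hv2, dotProduct_smul, hv, ← he] at h1
      simpa using h1
    · have h1 := aux_quad_le _ hA σ hmax (fun _ => 1)
      rw [hr, hq] at h1
      exact le_of_mul_le_mul_right h1 hn
  -- the smallest eigenvalue is negative
  have hτ : τ < 0 := by
    have h1 := aux_quad_ge _ hA τ hmin (Pi.single i0 1 - Pi.single w0 1)
    have hne : i0 ≠ w0 := hw0.ne
    simp only [Matrix.mulVec_sub, sub_dotProduct, dotProduct_sub, single_one_dotProduct,
      Matrix.mulVec_single_one, Matrix.col_apply, Pi.sub_apply, SimpleGraph.adjMatrix_apply,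
      Pi.single_eq_same, Pi.single_eq_of_ne hne, Pi.single_eq_of_ne hne.symm,
      SimpleGraph.irrefl, hw0, hw0.symm, if_true, if_false] at h1
    linarith
  -- its eigenvector
  obtain ⟨v, hv, hv2⟩ := aux_vec _ hA (e ⟨n - 1, by omega⟩)
  rw [← he, ← hτdef] at hv2
  have hvs : ∑ i, v i = 0 := by
    have h1 := aux_sum_mulVec G d hsrg.regular v
    rw [hv2] at h1
    simp only [Pi.smul_apply, smul_eq_mul] at h1
    rw [← Finset.mul_sum] at h1
    have h2 : (d - τ) * ∑ i, v i = 0 := by linarith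
    rcases mul_eq_zero.1 h2 with h3 | h3
    · linarith
    · exact h3
  have hvq : v ⬝ᵥ (G.adjMatrix ℝ).mulVec v = τ := by
    rw [hv2, dotProduct_smul, hv]; simp
  have hpoly : τ ^ 2 = d + l * τ + μ * (0 - 1 - τ) := by
    have h1 := aux_sq G n d l μ hsrg v
    rw [hvq, hv, hvs, hv2, smul_dotProduct, dotProduct_smul, hv] at h1
    simp only [smul_eq_mul, mul_one] at h1
    linarith
  have hdpoly : (d : ℝ) ^ 2 = d + l * d + μ * (n - 1 - d) := by
    have h1 := aux_sq G n d l μ hsrg (fun _ => 1)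
    rw [hq, hr, hs, hones] at h1
    have h2 : (fun _ => (d : ℝ) : V → ℝ) ⬝ᵥ (fun _ => (d : ℝ)) = n * (d : ℝ) ^ 2 := by
      simp [dotProduct, hsrg.card, sq]
    rw [h2] at h1
    apply mul_left_cancel₀ hn.ne'
    rw [h1]; ring
  have hc : -1 - τ ≤ n - 1 - d := by
    have h1 := aux_lap Gᶜ (n - d - 1) hsrg.compl_is_regular v
    rw [hcast, aux_compl, Matrix.sub_mulVec, Matrix.sub_mulVec, dotProduct_sub, dotProduct_sub,
      aux_J, hvs, hvq, Matrix.one_mulVec, hv] at h1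
    linarith
  have hprod : ((l : ℝ) - μ - τ) * τ = μ - d := by linear_combination -hpoly
  have hθ : 0 ≤ (l : ℝ) - μ - τ := by
    by_contra hcon
    push Not at hcon
    nlinarith [mul_pos_of_neg_of_neg hcon hτ]
  have hnμ : (n : ℝ) * μ = (d - ((l : ℝ) - μ - τ)) * (d - τ) := by
    linear_combination -hdpoly + hpoly
  have main := fun k hk => aux_gtheta G n d l μ hsrg hn τ ((l : ℝ) - μ - τ) hτ hθ (by ring) hprod
    hnμ hm hc k hk
  have h1 : gtheta 1 G = n * τ / (τ - d) := by
    rw [main 1 le_rfl, Nat.cast_one, one_mul, min_eq_left]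
    rw [div_le_iff_of_neg (by linarith)]
    nlinarith
  refine ⟨?_, ?_⟩
  · rw [h1]; exact main k hk
  · rw [main k hk, hσ]
    congr 1
    ring
end
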